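/- Let R be a commutative ring, M an R-module, and R' = A₀[M] with A₀ = R the trivial square-zero extension of R by M, with projection π : R' → R. Let F be a finitely generated projective R-module, and let F' be a finitely presented R'-module that is flat over R' and is equipped with an isomorphism of R-modules F' ⊗_{R'} R ≅ F (base change along π). Then F' is isomorphic as an R'-module to R' ⊗_R F. (This expresses that every flat deformation of a locally free sheaf over the square-zero extension Spec A₀[M] is locally the pullback π*(F|_{U_i}), as used in the construction of Proposition 3.2.) -/

import Mathlib

/-!
By the flatness criterion for finitely presented modules, `F'` is projective over `R' = A₀[M]`,
and so is `R' ⊗[R] F`.  Both become isomorphic to `F` after base change along `π : R' → R`.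
It therefore suffices to know that projective modules over a ring `S` are determined by their
reduction modulo a square-zero ideal `I`.  If `P` and `Q` are projective with `P / IP ≃ Q / IQ`,
projectivity lifts this isomorphism and its inverse to maps `f : P → Q` and `g : Q → P`.
The composites `g ∘ f` and `f ∘ g` are the identity modulo `I`, hence differ from the identity by
an endomorphism of square zero; they are therefore bijective, and so is `f`.
-/


open TensorProduct

universe u

namespace SquareZero

variable {S R : Type*} [CommRing S] [CommRing R] [Algebra S R]

/-- The kernel of the reduction map `P → R ⊗[S] P` along a surjection `S → R` with kernel `I`
is contained in `I P`. -/
lemma mem_of_one_tmul_eq_zero {P : Type*} [AddCommGroup P] [Module S P]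
    (hsurj : Function.Surjective (algebraMap S R)) {p : P} (hp : (1 : R) ⊗ₜ[S] p = 0) :
    p ∈ RingHom.ker (algebraMap S R) • (⊤ : Submodule S P) := by
  let e := (Ideal.quotientKerAlgEquivOfSurjective (f := Algebra.ofId S R) hsurj).symm
  have h := congrArg (TensorProduct.map e.toLinearMap (LinearMap.id : P →ₗ[S] P)) hp
  have he : e.toLinearMap (1 : R) = 1 := map_one e
  rw [TensorProduct.map_tmul, map_zero, he] at h
  have h2 := congrArg (quotTensorEquivQuotSMul P _) h
  rw [quotTensorEquivQuotSMul_mk_one_tmul, map_zero] at h2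
  exact (Submodule.Quotient.mk_eq_zero _).mp h2

/-- An endomorphism inducing the identity modulo a square-zero ideal is bijective: it differs
from the identity by an endomorphism of square zero. -/
lemma bijective_of_baseChange_eq_id {P : Type*} [AddCommGroup P] [Module S P]
    (hsurj : Function.Surjective (algebraMap S R))
    (hsq : RingHom.ker (algebraMap S R) ^ 2 = ⊥) (h : P →ₗ[S] P)
    (hh : ∀ p, (1 : R) ⊗ₜ[S] h p = 1 ⊗ₜ[S] p) : Function.Bijective h := by
  rw [← Module.End.isUnit_iff]
  have hmem (p : P) : (h - 1) p ∈ RingHom.ker (algebraMap S R) • (⊤ : Submodule S P) := by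
    apply mem_of_one_tmul_eq_zero hsurj
    simp [TensorProduct.tmul_sub, hh]
  have hnil : IsNilpotent (h - 1) := by
    refine ⟨2, LinearMap.ext fun p ↦ ?_⟩
    have h1 : (h - 1) ((h - 1) p) ∈
        (RingHom.ker (algebraMap S R) • (⊤ : Submodule S P)).map (h - 1) :=
      Submodule.mem_map_of_mem (hmem p)
    have hle : (RingHom.ker (algebraMap S R) • (⊤ : Submodule S P)).map (h - 1) ≤ ⊥ := by
      have hbot : (⊥ : Ideal S) • (⊤ : Submodule S P) = ⊥ := by simp
      rw [Submodule.map_smul'', ← hbot, ← hsq, pow_two, Submodule.mul_smul]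
      refine Submodule.smul_mono le_rfl ?_
      rintro _ ⟨x, -, rfl⟩
      exact hmem x
    rw [pow_two]
    exact (Submodule.mem_bot S).mp (hle h1)
  simpa using hnil.isUnit_one_add

/-- A map between base changes out of a projective module lifts along a surjection `S → R`. -/
lemma exists_lift {P Q : Type*} [AddCommGroup P] [Module S P] [Module.Projective S P]
    [AddCommGroup Q] [Module S Q] (hsurj : Function.Surjective (algebraMap S R))
    (e : R ⊗[S] P →ₗ[R] R ⊗[S] Q) :
    ∃ f : P →ₗ[S] Q, ∀ p, (1 : R) ⊗ₜ[S] f p = e (1 ⊗ₜ p) := by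
  have hs : Function.Surjective (TensorProduct.mk S R Q 1) :=
    TensorProduct.mk_surjective S Q R hsurj
  obtain ⟨f, hf⟩ := Module.projective_lifting_property (TensorProduct.mk S R Q 1)
    ((e.restrictScalars S) ∘ₗ TensorProduct.mk S R P 1) hs
  exact ⟨f, fun p ↦ LinearMap.congr_fun hf p⟩

/-- Projective modules which are isomorphic modulo a square-zero ideal are isomorphic. -/
theorem nonempty_linearEquiv {P Q : Type*} [AddCommGroup P] [Module S P] [Module.Projective S P]
    [AddCommGroup Q] [Module S Q] [Module.Projective S Q]
    (hsurj : Function.Surjective (algebraMap S R))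
    (hsq : RingHom.ker (algebraMap S R) ^ 2 = ⊥)
    (e : R ⊗[S] P ≃ₗ[R] R ⊗[S] Q) : Nonempty (P ≃ₗ[S] Q) := by
  obtain ⟨f, hf⟩ := exists_lift hsurj e.toLinearMap
  obtain ⟨g, hg⟩ := exists_lift hsurj e.symm.toLinearMap
  have hgf := bijective_of_baseChange_eq_id hsurj hsq (g ∘ₗ f) (by simp [hf, hg])
  have hfg := bijective_of_baseChange_eq_id hsurj hsq (f ∘ₗ g) (by simp [hf, hg])
  rw [LinearMap.coe_comp] at hgf hfg
  exact ⟨LinearEquiv.ofBijective f ⟨hgf.1.of_comp, hfg.2.of_comp⟩⟩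

end SquareZero

/-- Let `R' = A₀[M]` be the trivial square-zero extension of a commutative ring `R` by a
module `M`, with projection `π : R' → R`.  Every finitely presented `R'`-module `F'`
which is flat over `R'` and whose base change along `π` is isomorphic to a finitely
generated projective `R`-module `F` is isomorphic, as an `R'`-module, to the pullback
`R' ⊗[R] F`. -/
theorem flat_deformation_of_projective_is_pullback
    (R M F : Type u) [CommRing R] [AddCommGroup M] [Module R M]
    [Module Rᵐᵒᵖ M] [IsCentralScalar R M]
    [AddCommGroup F] [Module R F] [Module.Finite R F] [Module.Projective R F]
    (F' : Type u) [AddCommGroup F'] [Module (TrivSqZeroExt R M) F']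
    (hfp : Module.FinitePresentation (TrivSqZeroExt R M) F')
    (hflat : Module.Flat (TrivSqZeroExt R M) F') :
    letI : Algebra (TrivSqZeroExt R M) R :=
      ((TrivSqZeroExt.fstHom R R M : TrivSqZeroExt R M →ₐ[R] R) :
        TrivSqZeroExt R M →+* R).toAlgebra
    Nonempty ((R ⊗[TrivSqZeroExt R M] F') ≃ₗ[R] F) →
      Nonempty (F' ≃ₗ[TrivSqZeroExt R M] (TrivSqZeroExt R M ⊗[R] F)) := by
  let : Algebra (TrivSqZeroExt R M) R :=
    ((TrivSqZeroExt.fstHom R R M : TrivSqZeroExt R M →ₐ[R] R) :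
      TrivSqZeroExt R M →+* R).toAlgebra
  rintro ⟨e⟩
  have hproj : Module.Projective (TrivSqZeroExt R M) F' :=
    Module.Flat.projective_of_finitePresentation
  have hsurj : Function.Surjective (algebraMap (TrivSqZeroExt R M) R) :=
    TrivSqZeroExt.fst_surjective
  have hsq : RingHom.ker (algebraMap (TrivSqZeroExt R M) R) ^ 2 = ⊥ :=
    TrivSqZeroExt.kerIdeal_sq R M
  have : IsScalarTower R (TrivSqZeroExt R M) R :=
    IsScalarTower.of_algebraMap_eq fun _ ↦ rfl
  exact SquareZero.nonempty_linearEquiv hsurj hsq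
    (e ≪≫ₗ (TensorProduct.lid R F).symm ≪≫ₗ
      (AlgebraTensorModule.cancelBaseChange R (TrivSqZeroExt R M) R R F).symm)
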